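/- Weak pseudo-randomness: in the high temperature phase with unique fixed point p* of φ(p)=p, for every ε > 0 and every even integer l ≥ 4, the probability under the Gibbs measure p_n that a random graph X satisfies both |N_edges(X) − p*·n²/2| ≤ ε·n² and N_{C_l}(X) ≤ (n·p*)^l + ε·n^l tends to 1 as n → ∞, where N_edges(X) is the number of edges of X and N_{C_l}(X) is the number of labelled copies of the l-cycle in X. -/

import Mathlib

open Finset

open scoped Classical

noncomputable section

/-- The set of edges of the complete graph `K_n` on vertex set `[n] = Fin n`:
unordered pairs of distinct vertices. -/
abbrev EdgeK (n : ℕ) : Type := {e : Sym2 (Fin n) // ¬ e.IsDiag}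

/-- A graph on `[n]`, identified with an element `X ∈ {0,1}^{E(K_n)}`. -/
abbrev Config (n : ℕ) : Type := EdgeK n → Bool

/-- The image of an edge under an injection of vertex sets. -/
def mapEdge {m n : ℕ} (v : Fin m ↪ Fin n) (a : EdgeK m) : EdgeK n :=
  ⟨a.1.map v, fun h => a.2 ((Sym2.isDiag_map v.injective).mp h)⟩

/-- The complete graph `K_n` as a configuration. -/
def fullConfig (n : ℕ) : Config n := fun _ => true

/-- `X ∪ {e}`. -/
def addEdge {n : ℕ} (X : Config n) (e : EdgeK n) : Config n :=
  fun f => if f = e then true else X f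

/-- `X_{e+}` (for `b = true`), resp. `X_{e-}` (for `b = false`). -/
def setEdge {n : ℕ} (X : Config n) (e : EdgeK n) (b : Bool) : Config n :=
  fun f => if f = e then b else X f

/-- `N_G(X)`: the number of tuples of `m` distinct vertices of `[n]` such that every
edge of the pattern graph `G` (a graph on `m` labelled vertices) is mapped to an edge of `X`. -/
def copyCount {n m : ℕ} (X : Config n) (G : Finset (EdgeK m)) : ℕ :=
  (univ.filter fun v : Fin m ↪ Fin n => ∀ a ∈ G, X (mapEdge v a) = true).card

/-- `N_G(X, e)`: the number of such tuples for `X ∪ {e}` which moreover use the edge `e`. -/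
def rootedCount {n m : ℕ} (X : Config n) (G : Finset (EdgeK m)) (e : EdgeK n) : ℕ :=
  (univ.filter fun v : Fin m ↪ Fin n =>
    (∃ a ∈ G, mapEdge v a = e) ∧ ∀ a ∈ G, addEdge X e (mapEdge v a) = true).card

/-- `N_G(X, e, e')`: the number of such tuples for `X ∪ {e, e'}` which use both `e` and `e'`. -/
def rooted2Count {n m : ℕ} (X : Config n) (G : Finset (EdgeK m)) (e e' : EdgeK n) : ℕ :=
  (univ.filter fun v : Fin m ↪ Fin n =>
    (∃ a ∈ G, mapEdge v a = e) ∧ (∃ a ∈ G, mapEdge v a = e') ∧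
      ∀ a ∈ G, addEdge (addEdge X e) e' (mapEdge v a) = true).card

/-- The number of edges of the graph `X`. -/
def edgeCount {n : ℕ} (X : Config n) : ℕ := (univ.filter fun e => X e = true).card

/-- Hamming distance between two graphs: the number of edges of disagreement. -/
def hamDist {n : ℕ} (X Y : Config n) : ℕ := (univ.filter fun f => X f ≠ Y f).card

/-- The Hamiltonian `H(X) = ∑ i, β i * N_{G_i}(X) / n^(|V_i| - 2)`. -/
def ergmH {s : ℕ} (V : Fin s → ℕ) (Pt : ∀ i, Finset (EdgeK (V i))) (β : Fin s → ℝ)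
    (n : ℕ) (X : Config n) : ℝ :=
  ∑ i, β i * (copyCount X (Pt i) : ℝ) / (n : ℝ) ^ (V i - 2)

/-- The Gibbs measure `p_n(X) = exp(H(X)) / Z_n`. -/
def gibbs {s : ℕ} (V : Fin s → ℕ) (Pt : ∀ i, Finset (EdgeK (V i))) (β : Fin s → ℝ)
    (n : ℕ) (X : Config n) : ℝ :=
  Real.exp (ergmH V Pt β n X) / ∑ Y : Config n, Real.exp (ergmH V Pt β n Y)

/-- `∂_e H(X) = H(X_{e+}) - H(X_{e-})`. -/
def dH {s : ℕ} (V : Fin s → ℕ) (Pt : ∀ i, Finset (EdgeK (V i))) (β : Fin s → ℝ)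
    (n : ℕ) (X : Config n) (e : EdgeK n) : ℝ :=
  ergmH V Pt β n (setEdge X e true) - ergmH V Pt β n (setEdge X e false)

/-- The transition kernel of the Glauber dynamics: a uniformly random edge `e` of `K_n` is
chosen and set present with probability `exp(∂_e H(X)) /(1 + exp(∂_e H(X)))`, absent
otherwise. -/
def glauber {s : ℕ} (V : Fin s → ℕ) (Pt : ∀ i, Finset (EdgeK (V i))) (β : Fin s → ℝ)
    (n : ℕ) (X Y : Config n) : ℝ :=
  ((n.choose 2 : ℝ))⁻¹ * ∑ e : EdgeK n,
    ((if Y = setEdge X e true then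
        Real.exp (dH V Pt β n X e) / (1 + Real.exp (dH V Pt β n X e)) else 0)
      + (if Y = setEdge X e false then 1 / (1 + Real.exp (dH V Pt β n X e)) else 0))

/-- The `t`-step distribution of the Markov chain with one-step kernel `K`,
started from a given state. -/
def kernelStep {n : ℕ} (K : Config n → Config n → ℝ) : ℕ → Config n → Config n → ℝ
  | 0 => fun x y => if y = x then 1 else 0
  | (t+1) => fun x y => ∑ z, kernelStep K t x z * K z y

/-- Total variation distance between two (signed) distributions on `Config n`. -/
def tvDist {n : ℕ} (μ ν : Config n → ℝ) : ℝ := (∑ Y, |μ Y - ν Y|) / 2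

/-- `mixes K π t` says that after `t` steps the chain with kernel `K` is within total
variation distance `e⁻¹` of `π` from every starting state. -/
def mixes {n : ℕ} (K : Config n → Config n → ℝ) (π : Config n → ℝ) (t : ℕ) : Prop :=
  ∀ x, tvDist (kernelStep K t x) π ≤ Real.exp (-1)

/-- The mixing time: the least `t` such that from every starting state the chain is within
total variation distance `e⁻¹` of `π`. -/
def mixingTime {n : ℕ} (K : Config n → Config n → ℝ) (π : Config n → ℝ) : ℕ :=
  sInf {t | mixes K π t}

/-- `Ψ(p) = ∑ i, 2 β_i |E_i| p^(|E_i| - 1)`. -/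
def PsiF {s : ℕ} {V : Fin s → ℕ} (Pt : ∀ i, Finset (EdgeK (V i))) (β : Fin s → ℝ)
    (p : ℝ) : ℝ :=
  ∑ i, 2 * β i * ((Pt i).card : ℝ) * p ^ ((Pt i).card - 1)

/-- `φ(p) = exp(Ψ(p)) / (1 + exp(Ψ(p)))`. -/
def phiF {s : ℕ} {V : Fin s → ℕ} (Pt : ∀ i, Finset (EdgeK (V i))) (β : Fin s → ℝ)
    (p : ℝ) : ℝ :=
  Real.exp (PsiF Pt β p) / (1 + Real.exp (PsiF Pt β p))

/-- High temperature phase: `φ(p) = p` has a unique solution `p*` (in `[0,1]`), which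
moreover satisfies `φ'(p*) < 1`. -/
def HighTemp {s : ℕ} {V : Fin s → ℕ} (Pt : ∀ i, Finset (EdgeK (V i))) (β : Fin s → ℝ)
    (pstar : ℝ) : Prop :=
  pstar ∈ Set.Icc (0:ℝ) 1 ∧ phiF Pt β pstar = pstar ∧
    (∀ q ∈ Set.Icc (0:ℝ) 1, phiF Pt β q = q → q = pstar) ∧
    deriv (phiF Pt β) pstar < 1

/-- Low temperature phase: `φ(p) = p` has at least two solutions `p` with `φ'(p) < 1`. -/
def LowTemp {s : ℕ} {V : Fin s → ℕ} (Pt : ∀ i, Finset (EdgeK (V i))) (β : Fin s → ℝ) : Prop :=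
  ∃ p₁ p₂ : ℝ, p₁ ∈ Set.Icc (0:ℝ) 1 ∧ p₂ ∈ Set.Icc (0:ℝ) 1 ∧ p₁ ≠ p₂ ∧
    phiF Pt β p₁ = p₁ ∧ phiF Pt β p₂ = p₂ ∧
    deriv (phiF Pt β) p₁ < 1 ∧ deriv (phiF Pt β) p₂ < 1

/-- `r_G(X, e) = (N_G(X,e) / (2 |E(G)| n^(|V(G)|-2)))^(1/(|E(G)|-1))`. -/
def rG {n m : ℕ} (X : Config n) (G : Finset (EdgeK m)) (e : EdgeK n) : ℝ :=
  ((rootedCount X G e : ℝ) / (2 * (G.card : ℝ) * (n : ℝ) ^ (m - 2))) ^ (((G.card : ℝ) - 1)⁻¹)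

/-- The set of values `r_G(X,e)` over all edges `e` of `K_n` and all graphs `G` on at
most `L` vertices with at least two edges. -/
def rSet (L n : ℕ) (X : Config n) : Set ℝ :=
  {r | ∃ m, m ≤ L ∧ ∃ G : Finset (EdgeK m), 2 ≤ G.card ∧ ∃ e : EdgeK n, r = rG X G e}

/-- `r̄(X)`: the maximum of `r_G(X,e)` over all edges `e` of `K_n` and all graphs `G` on
at most `L` vertices with at least two edges. -/
def rbar (L n : ℕ) (X : Config n) : ℝ := sSup (rSet L n X)

/-- `r_min(X)`: the corresponding minimum. -/
def rmin (L n : ℕ) (X : Config n) : ℝ := sInf (rSet L n X)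

/-- The cycle `C_l` on `l` labelled vertices, as a pattern graph. -/
def cyclePattern (l : ℕ) [NeZero l] : Finset (EdgeK l) :=
  univ.filter fun e => ∃ i : Fin l, e.1 = s(i, i + 1)

/-- The probability of a length-`T` trajectory `w` for the chain with kernel `K`
started at `x`. -/
def trajProb {n T : ℕ} (K : Config n → Config n → ℝ) (x : Config n)
    (w : Fin (T+1) → Config n) : ℝ :=
  (if w 0 = x then 1 else 0) * ∏ i : Fin T, K (w i.castSucc) (w i.succ)

/-- Two edges of `K_n` share a vertex. -/
def sharesVertex {n : ℕ} (e e' : EdgeK n) : Prop := ∃ v, v ∈ e.1 ∧ v ∈ e'.1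

end


noncomputable section WPR

/-- real-valued indicator that the edge is present. -/
def wxi {n : ℕ} (X : Config n) (f : EdgeK n) : ℝ := if X f = true then 1 else 0

/-- indicator that all edges of `B` are present. -/
def wind {n : ℕ} (B : Finset (EdgeK n)) (X : Config n) : ℝ := ∏ f ∈ B, wxi X f

/-- set all edges in `B` to absent. -/
def wzero {n : ℕ} (B : Finset (EdgeK n)) (X : Config n) : Config n :=
  fun f => if f ∈ B then false else X f

lemma wxi_nonneg {n : ℕ} (X : Config n) (f : EdgeK n) : 0 ≤ wxi X f := by
  unfold wxi; split_ifs <;> norm_num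

lemma wxi_le_one {n : ℕ} (X : Config n) (f : EdgeK n) : wxi X f ≤ 1 := by
  unfold wxi; split_ifs <;> norm_num

lemma wind_nonneg {n : ℕ} (B : Finset (EdgeK n)) (X : Config n) : 0 ≤ wind B X :=
  Finset.prod_nonneg fun f _ => wxi_nonneg X f

lemma wind_le_one {n : ℕ} (B : Finset (EdgeK n)) (X : Config n) : wind B X ≤ 1 :=
  Finset.prod_le_one (fun f _ => wxi_nonneg X f) fun f _ => wxi_le_one X f

lemma wind_eq {n : ℕ} (B : Finset (EdgeK n)) (X : Config n) :
    wind B X = if ∀ f ∈ B, X f = true then 1 else 0 := by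
  unfold wind wxi
  rw [Finset.prod_ite_zero]
  simp

lemma wind_setEdge {n : ℕ} (B : Finset (EdgeK n)) (f : EdgeK n) (hf : f ∉ B) (X : Config n)
    (b : Bool) : wind B (setEdge X f b) = wind B X := by
  refine Finset.prod_congr rfl fun g hg => ?_
  have : g ≠ f := fun h => hf (h ▸ hg)
  simp [wxi, setEdge, this]

lemma wind_wzero {n : ℕ} (A B : Finset (EdgeK n)) (h : Disjoint A B) (X : Config n) :
    wind B (wzero A X) = wind B X := by
  refine Finset.prod_congr rfl fun g hg => ?_
  have : g ∉ A := fun h' => (Finset.disjoint_left.mp h) h' hg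
  simp [wxi, wzero, this]

lemma wzero_setEdge {n : ℕ} (B : Finset (EdgeK n)) (f : EdgeK n) (hf : f ∈ B) (X : Config n)
    (b : Bool) : wzero B (setEdge X f b) = wzero B X := by
  funext g
  by_cases hg : g ∈ B
  · simp [wzero, hg]
  · have : g ≠ f := fun h => hg (h ▸ hf)
    simp [wzero, setEdge, this]

/-- one-edge resampling identity. -/
def WResamp {n : ℕ} (μ : Config n → ℝ) (σ : EdgeK n → Config n → ℝ) : Prop :=
  ∀ f (h : Config n → ℝ), (∀ X b, h (setEdge X f b) = h X) →
    ∑ X, μ X * (h X * wxi X f) = ∑ X, μ X * (h X * σ f X)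

lemma core_ind {n : ℕ} (μ : Config n → ℝ) (hμ0 : ∀ X, 0 ≤ μ X)
    (σ : EdgeK n → Config n → ℝ) (hσ : WResamp μ σ) (τ : ℝ) (q : ℝ)
    (hq0 : 0 ≤ q) (hq1 : q ≤ 1) (δ : ℝ)
    (hδ : ∀ f, ∑ X, μ X * max (τ * (σ f X - q)) 0 ≤ δ) (B : Finset (EdgeK n))
    (h : Config n → ℝ) (h0 : ∀ X, 0 ≤ h X) (h1 : ∀ X, h X ≤ 1)
    (hB : ∀ f ∈ B, ∀ X b, h (setEdge X f b) = h X) :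
    τ * ∑ X, μ X * (h X * wind B X) ≤ τ * q ^ B.card * ∑ X, μ X * h X + B.card * δ := by
  induction B using Finset.induction_on with
  | empty => simp [wind]
  | insert f B hf ih =>
    have hδ0 : 0 ≤ δ := le_trans (Finset.sum_nonneg fun X _ =>
      mul_nonneg (hμ0 X) (le_max_right _ _)) (hδ f)
    have ih' := ih (fun g hg => hB g (Finset.mem_insert_of_mem hg))
    have e1 : ∑ X, μ X * (h X * wind (insert f B) X)
        = ∑ X, μ X * ((h X * wind B X) * σ f X) := by
      rw [← hσ f (fun X => h X * wind B X) (fun X b => by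
        simp only [hB f (Finset.mem_insert_self _ _), wind_setEdge B f hf])]
      refine Finset.sum_congr rfl fun X _ => ?_
      rw [wind, Finset.prod_insert hf]
      change _ = μ X * (h X * (∏ g ∈ B, wxi X g) * wxi X f)
      ring
    have e2 : τ * ∑ X, μ X * ((h X * wind B X) * σ f X)
        ≤ q * (τ * ∑ X, μ X * (h X * wind B X)) + δ := by
      refine le_trans ?_ (add_le_add_right (hδ f) _)
      rw [Finset.mul_sum, Finset.mul_sum, Finset.mul_sum, ← Finset.sum_add_distrib]
      refine Finset.sum_le_sum fun X _ => ?_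
      have k0 : 0 ≤ h X * wind B X := mul_nonneg (h0 X) (wind_nonneg B X)
      have k1 : h X * wind B X ≤ 1 := mul_le_one₀ (h1 X) (wind_nonneg B X) (wind_le_one B X)
      have k2 : (h X * wind B X) * (τ * (σ f X - q)) ≤ max (τ * (σ f X - q)) 0 := by
        calc _ ≤ (h X * wind B X) * max (τ * (σ f X - q)) 0 :=
              mul_le_mul_of_nonneg_left (le_max_left _ _) k0
          _ ≤ 1 * max (τ * (σ f X - q)) 0 :=
              mul_le_mul_of_nonneg_right k1 (le_max_right _ _)
          _ = _ := one_mul _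
      have := mul_le_mul_of_nonneg_left k2 (hμ0 X)
      nlinarith
    rw [e1, Finset.card_insert_of_notMem hf]
    refine e2.trans ?_
    have e3 := mul_le_mul_of_nonneg_left ih' hq0
    have e4 : q * (B.card * δ) ≤ B.card * δ := by
      have : (0:ℝ) ≤ B.card * δ := by positivity
      nlinarith
    push_cast
    rw [pow_succ]
    nlinarith

/-- density of a family of edge sets. -/
def wdens {n : ℕ} {ι : Type} (I : Finset ι) (B : ι → Finset (EdgeK n)) (X : Config n) : ℝ :=
  (∑ i ∈ I, wind (B i) X) / I.card

lemma wdens_nonneg {n : ℕ} {ι : Type} (I : Finset ι) (B : ι → Finset (EdgeK n)) (X : Config n) :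
    0 ≤ wdens I B X :=
  div_nonneg (Finset.sum_nonneg fun _ _ => wind_nonneg _ _) (Nat.cast_nonneg _)

lemma wdens_le_one {n : ℕ} {ι : Type} (I : Finset ι) (B : ι → Finset (EdgeK n)) (X : Config n) :
    wdens I B X ≤ 1 := by
  refine div_le_one_of_le₀ ?_ (Nat.cast_nonneg _)
  refine (Finset.sum_le_sum fun i _ => wind_le_one (B i) X).trans ?_
  simp

lemma wdens_wzero {n : ℕ} {ι : Type} (I : Finset ι) (hI : I.Nonempty)
    (B : ι → Finset (EdgeK n)) (A : Finset (EdgeK n))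
    (η : ℝ) (hη : ((I.filter fun j => ¬ Disjoint A (B j)).card : ℝ) ≤ η * I.card) (X : Config n) :
    |wdens I B (wzero A X) - wdens I B X| ≤ η := by
  have hc : (0:ℝ) < I.card := by exact_mod_cast hI.card_pos
  unfold wdens
  rw [← sub_div, ← Finset.sum_sub_distrib, abs_div, abs_of_pos hc, div_le_iff₀ hc]
  refine le_trans ?_ hη
  refine (Finset.abs_sum_le_sum_abs _ _).trans ?_
  rw [Finset.card_filter]
  push_cast
  refine Finset.sum_le_sum fun j _ => ?_
  by_cases hd : Disjoint A (B j)
  · simp [hd, wind_wzero]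
  · simp only [hd, not_false_eq_true, if_true]
    rw [abs_le]
    have := wind_nonneg (B j) X
    have := wind_le_one (B j) X
    have := wind_nonneg (B j) (wzero A X)
    have := wind_le_one (B j) (wzero A X)
    constructor <;> linarith

lemma core_main {n : ℕ} (μ : Config n → ℝ) (hμ0 : ∀ X, 0 ≤ μ X) (hμ1 : ∑ X, μ X = 1)
    (σ : EdgeK n → Config n → ℝ) (hσ : WResamp μ σ) (τ : ℝ) (hτ : |τ| = 1) (q : ℝ)
    (hq0 : 0 ≤ q) (hq1 : q ≤ 1) (δ : ℝ)
    (hδ : ∀ f, ∑ X, μ X * max (τ * (σ f X - q)) 0 ≤ δ)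
    {ι : Type} (I : Finset ι) (hI : I.Nonempty) (B : ι → Finset (EdgeK n)) (m : ℕ)
    (hm : ∀ i ∈ I, (B i).card = m) (η : ℝ)
    (hη : ∀ i ∈ I, ((I.filter fun j => ¬ Disjoint (B i) (B j)).card : ℝ) ≤ η * I.card) :
    ∑ X, μ X * (max (τ * (wdens I B X - q ^ m)) 0) ^ 2 ≤ 2 * η + m * δ := by
  set W := wdens I B with hW
  set c := q ^ m with hc
  have hcc : (0:ℝ) < I.card := by exact_mod_cast hI.card_pos
  have hc0 : 0 ≤ c := by positivity
  have hc1 : c ≤ 1 := pow_le_one₀ hq0 hq1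
  set D : Config n → ℝ := fun X => max (τ * (W X - c)) 0 with hD
  have hD0 : ∀ X, 0 ≤ D X := fun X => le_max_right _ _
  have hD1 : ∀ X, D X ≤ 1 := fun X => by
    refine max_le ?_ zero_le_one
    refine (le_abs_self _).trans ?_
    rw [abs_mul, hτ, one_mul, abs_le]
    have := wdens_nonneg I B X
    have := wdens_le_one I B X
    constructor <;> simp only [hW] <;> linarith
  have hDz : ∀ i ∈ I, ∀ X, |D (wzero (B i) X) - D X| ≤ η := fun i hi X => by
    refine (abs_max_sub_max_le_abs _ _ _).trans ?_
    rw [← mul_sub, abs_mul, hτ, one_mul, sub_sub_sub_cancel_right]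
    exact wdens_wzero I hI B (B i) η (hη i hi) X
  have key : ∀ i ∈ I, τ * ∑ X, μ X * (D X * wind (B i) X)
      ≤ τ * c * ∑ X, μ X * D X + (2 * η + m * δ) := fun i hi => by
    have h1 := core_ind μ hμ0 σ hσ τ q hq0 hq1 δ hδ (B i) (fun X => D (wzero (B i) X))
      (fun X => hD0 _) (fun X => hD1 _) (fun f hf X b => by
        simp only [wzero_setEdge (B i) f hf])
    rw [hm i hi] at h1
    have h2 : τ * ∑ X, μ X * (D X * wind (B i) X)
        ≤ τ * ∑ X, μ X * (D (wzero (B i) X) * wind (B i) X) + η := by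
      have : η = ∑ X, μ X * η := by rw [← Finset.sum_mul, hμ1, one_mul]
      rw [this, Finset.mul_sum, Finset.mul_sum, ← Finset.sum_add_distrib]
      refine Finset.sum_le_sum fun X _ => ?_
      have a1 : τ * (D X - D (wzero (B i) X)) * wind (B i) X ≤ η := by
        refine (le_abs_self _).trans ?_
        rw [abs_mul, abs_mul, hτ, one_mul, abs_sub_comm, abs_of_nonneg (wind_nonneg _ _)]
        calc _ ≤ |D (wzero (B i) X) - D X| * 1 :=
              mul_le_mul_of_nonneg_left (wind_le_one _ _) (abs_nonneg _)
          _ ≤ η := by rw [mul_one]; exact hDz i hi X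
      have := mul_le_mul_of_nonneg_left a1 (hμ0 X)
      nlinarith
    have h3 : τ * c * ∑ X, μ X * D (wzero (B i) X) ≤ τ * c * ∑ X, μ X * D X + η := by
      have : η = ∑ X, μ X * η := by rw [← Finset.sum_mul, hμ1, one_mul]
      rw [this, Finset.mul_sum, Finset.mul_sum, ← Finset.sum_add_distrib]
      refine Finset.sum_le_sum fun X _ => ?_
      have a1 : τ * c * (D (wzero (B i) X) - D X) ≤ η := by
        refine (le_abs_self _).trans ?_
        rw [abs_mul, abs_mul, hτ, one_mul, abs_of_nonneg hc0]
        calc _ ≤ 1 * |D (wzero (B i) X) - D X| :=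
              mul_le_mul_of_nonneg_right hc1 (abs_nonneg _)
          _ ≤ η := by rw [one_mul]; exact hDz i hi X
      have := mul_le_mul_of_nonneg_left a1 (hμ0 X)
      nlinarith
    linarith
  have hsum : τ * ∑ X, μ X * (D X * W X) ≤ τ * c * ∑ X, μ X * D X + (2 * η + m * δ) := by
    have e1 : τ * ∑ X, μ X * (D X * W X)
        = (∑ i ∈ I, τ * ∑ X, μ X * (D X * wind (B i) X)) / I.card := by
      rw [← Finset.mul_sum, Finset.sum_comm, mul_div_assoc, Finset.sum_div]
      congr 1
      refine Finset.sum_congr rfl fun X _ => ?_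
      rw [← Finset.mul_sum, ← Finset.mul_sum, hW, wdens]
      ring
    rw [e1, div_le_iff₀ hcc]
    refine (Finset.sum_le_sum key).trans ?_
    rw [Finset.sum_const, nsmul_eq_mul, mul_comm]
  have hfin : ∑ X, μ X * (D X) ^ 2
      = τ * ∑ X, μ X * (D X * W X) - τ * c * ∑ X, μ X * D X := by
    rw [Finset.mul_sum, Finset.mul_sum, ← Finset.sum_sub_distrib]
    refine Finset.sum_congr rfl fun X _ => ?_
    have : D X * D X = D X * (τ * (W X - c)) := by
      rcases le_total (τ * (W X - c)) 0 with h | h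
      · have : D X = 0 := max_eq_right h
        rw [this]; ring
      · have : D X = τ * (W X - c) := max_eq_left h
        rw [← this]
    rw [sq, this]; ring
  change ∑ X, μ X * (D X) ^ 2 ≤ _
  rw [hfin]; linarith


lemma w_exists_perm {j n : ℕ} (w w' : Fin j ↪ Fin n) :
    ∃ π : Equiv.Perm (Fin n), ∀ k, π (w k) = w' k := by
  obtain ⟨g, hg⟩ := (MulAction.isMultiplyPretransitive_iff (G := Equiv.Perm (Fin n))
    (α := Fin n) (n := j)).mp (Equiv.Perm.isMultiplyPretransitive (Fin n) j) w w'
  exact ⟨g, fun k => by rw [← hg]; rfl⟩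

lemma w_cnt_embed {j m n : ℕ} (u : Fin j ↪ Fin m) (w : Fin j ↪ Fin n) :
    (univ.filter fun v : Fin m ↪ Fin n => u.trans v = w).card * n.descFactorial j
      = n.descFactorial m := by
  have h1 : ∀ w' : Fin j ↪ Fin n, (univ.filter fun v : Fin m ↪ Fin n => u.trans v = w').card
      = (univ.filter fun v : Fin m ↪ Fin n => u.trans v = w).card := by
    intro w'
    obtain ⟨π, hπ⟩ := w_exists_perm w' w
    refine Finset.card_bij' (fun v _ => v.trans π.toEmbedding)
      (fun v _ => v.trans π.symm.toEmbedding) ?_ ?_ ?_ ?_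
    · intro v hv
      simp only [mem_filter, mem_univ, true_and] at hv ⊢
      ext k; simp [← hπ, ← hv]
    · intro v hv
      simp only [mem_filter, mem_univ, true_and] at hv ⊢
      ext k
      have := hπ k
      rw [← hv] at this
      simp only [Function.Embedding.trans_apply, Equiv.coe_toEmbedding] at this ⊢
      rw [← this]; simp
    · intro v _; ext; simp
    · intro v _; ext; simp
  have h2 := Finset.card_eq_sum_card_fiberwise (s := (univ : Finset (Fin m ↪ Fin n)))
    (t := (univ : Finset (Fin j ↪ Fin n))) (f := fun v => u.trans v) (fun _ _ => by simp)
  rw [Finset.sum_congr rfl (fun w' _ => h1 w'), Finset.sum_const] at h2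
  simp only [Finset.card_univ, Fintype.card_embedding_eq, Fintype.card_fin, smul_eq_mul] at h2
  rw [h2, mul_comm]

lemma w_cnt_range {j m n : ℕ} (w : Fin j ↪ Fin n) :
    (univ.filter fun v : Fin m ↪ Fin n => ∀ k, w k ∈ Set.range v).card * n.descFactorial j
      ≤ m.descFactorial j * n.descFactorial m := by
  have hsub : (univ.filter fun v : Fin m ↪ Fin n => ∀ k, w k ∈ Set.range v)
      ⊆ (univ : Finset (Fin j ↪ Fin m)).biUnion
        (fun u => univ.filter fun v : Fin m ↪ Fin n => u.trans v = w) := by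
    intro v hv
    simp only [mem_filter, mem_univ, true_and, Set.mem_range, mem_biUnion] at hv ⊢
    choose u hu using hv
    refine ⟨⟨u, fun a b hab => w.injective ?_⟩, ?_⟩
    · rw [← hu, ← hu, hab]
    · ext k; exact congrArg Fin.val (hu k)
  calc _ ≤ (∑ u : Fin j ↪ Fin m,
        (univ.filter fun v : Fin m ↪ Fin n => u.trans v = w).card) * n.descFactorial j :=
        Nat.mul_le_mul_right _ ((Finset.card_le_card hsub).trans Finset.card_biUnion_le)
    _ = _ := by
      rw [Finset.sum_mul, Finset.sum_congr rfl (fun u _ => w_cnt_embed u w), Finset.sum_const]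
      simp [Fintype.card_embedding_eq]

lemma mapEdge_inj {m n : ℕ} (v : Fin m ↪ Fin n) : Function.Injective (mapEdge v) := by
  intro a b h
  have := congrArg Subtype.val h
  exact Subtype.ext (Sym2.map.injective v.injective this)

lemma w_exists_perm_edge {n : ℕ} (f f' : EdgeK n) :
    ∃ π : Equiv.Perm (Fin n), mapEdge π.toEmbedding f = f' := by
  obtain ⟨f, hf⟩ := f
  obtain ⟨f', hf'⟩ := f'
  induction f with | _ x y
  induction f' with | _ x' y'
  rw [Sym2.mk_isDiag_iff] at hf hf'
  obtain ⟨π, hπ⟩ := w_exists_perm (n := n)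
    (⟨![x, y], by intro a b; fin_cases a <;> fin_cases b <;> simp [hf, Ne.symm hf]⟩ : Fin 2 ↪ Fin n)
    ⟨![x', y'], by intro a b; fin_cases a <;> fin_cases b <;> simp [hf', Ne.symm hf']⟩
  refine ⟨π, Subtype.ext ?_⟩
  have h0 : π x = x' := hπ 0
  have h1 : π y = y' := hπ 1
  simp [mapEdge, h0, h1]

lemma mapEdge_trans {m n k : ℕ} (v : Fin m ↪ Fin n) (w : Fin n ↪ Fin k) (a : EdgeK m) :
    mapEdge (v.trans w) a = mapEdge w (mapEdge v a) := by
  apply Subtype.ext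
  simp [mapEdge, Sym2.map_map]

lemma card_EdgeK (n : ℕ) : Fintype.card (EdgeK n) = n.choose 2 := by
  have := Sym2.card_subtype_not_diag (α := Fin n)
  rw [Fintype.card_fin] at this
  rw [← this]

lemma w_cnt_edge {m n : ℕ} (a : EdgeK m) (f : EdgeK n) :
    (univ.filter fun v : Fin m ↪ Fin n => mapEdge v a = f).card * n.choose 2
      = n.descFactorial m := by
  have h1 : ∀ f' : EdgeK n, (univ.filter fun v : Fin m ↪ Fin n => mapEdge v a = f').card
      = (univ.filter fun v : Fin m ↪ Fin n => mapEdge v a = f).card := by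
    intro f'
    obtain ⟨π, hπ⟩ := w_exists_perm_edge f' f
    refine Finset.card_bij' (fun v _ => v.trans π.toEmbedding)
      (fun v _ => v.trans π.symm.toEmbedding) ?_ ?_ ?_ ?_
    · intro v hv
      simp only [mem_filter, mem_univ, true_and] at hv ⊢
      rw [mapEdge_trans, hv, hπ]
    · intro v hv
      simp only [mem_filter, mem_univ, true_and] at hv ⊢
      apply mapEdge_inj π.toEmbedding
      rw [hπ, ← mapEdge_trans, ← hv]
      congr 1
      ext; simp
    · intro v _; ext; simp
    · intro v _; ext; simp
  have h2 := Finset.card_eq_sum_card_fiberwise (s := (univ : Finset (Fin m ↪ Fin n)))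
    (t := (univ : Finset (EdgeK n))) (f := fun v => mapEdge v a) (fun _ _ => by simp)
  rw [Finset.sum_congr rfl (fun w' _ => h1 w'), Finset.sum_const] at h2
  simp only [Finset.card_univ, Fintype.card_embedding_eq, Fintype.card_fin, smul_eq_mul] at h2
  rw [h2, card_EdgeK, mul_comm]

/-- two distinct edges in the image force three vertices in the range. -/
lemma w_cnt_two {m n : ℕ} (f g : EdgeK n) (hfg : g ≠ f) :
    (univ.filter fun v : Fin m ↪ Fin n =>
      (∃ a, mapEdge v a = f) ∧ (∃ b, mapEdge v b = g)).card * n.descFactorial 3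
      ≤ m.descFactorial 3 * n.descFactorial m := by
  obtain ⟨f, hf⟩ := f
  induction f with | _ x y
  rw [Sym2.mk_isDiag_iff] at hf
  obtain ⟨z, hz, hzx, hzy⟩ : ∃ z, z ∈ g.1 ∧ z ≠ x ∧ z ≠ y := by
    obtain ⟨g, hg⟩ := g
    induction g with | _ p q
    rw [Sym2.mk_isDiag_iff] at hg
    by_contra! hcon
    apply hfg
    apply Subtype.ext
    have hp := hcon p (by simp)
    have hq := hcon q (by simp)
    simp only [Sym2.eq_iff]
    by_cases h1 : p = x
    · by_cases h2 : q = x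
      · exact absurd (h1.trans h2.symm) hg
      · exact Or.inl ⟨h1, hq h2⟩
    · by_cases h2 : q = x
      · exact Or.inr ⟨hp h1, h2⟩
      · exact absurd ((hp h1).trans (hq h2).symm) hg
  have hmem : ∀ (v : Fin m ↪ Fin n) (a : EdgeK m) (t : Fin n), t ∈ (mapEdge v a).1 →
      t ∈ Set.range v := by
    intro v a t ht
    simp only [mapEdge, Sym2.mem_map] at ht
    obtain ⟨i, _, hi⟩ := ht
    exact ⟨i, hi⟩
  refine le_trans (Nat.mul_le_mul_right _ (Finset.card_le_card ?_)) (w_cnt_range (m := m)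
    (⟨![x, y, z], by
      intro a b
      fin_cases a <;> fin_cases b <;> simp [hf, Ne.symm hf, hzx, hzy, Ne.symm hzx, Ne.symm hzy]⟩ :
        Fin 3 ↪ Fin n))
  intro v hv
  simp only [mem_filter, mem_univ, true_and] at hv ⊢
  obtain ⟨⟨a, ha⟩, ⟨b, hb⟩⟩ := hv
  intro k
  fin_cases k
  · exact hmem v a x (by rw [ha]; simp)
  · exact hmem v a y (by rw [ha]; simp)
  · exact hmem v b z (by rw [hb]; exact hz)

/-- rooted index family. -/
def wI {m n : ℕ} (G : Finset (EdgeK m)) (f : EdgeK n) : Finset (EdgeK m × (Fin m ↪ Fin n)) :=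
  (G ×ˢ univ).filter fun p => mapEdge p.2 p.1 = f

/-- remaining edges of a rooted copy. -/
def wB {m n : ℕ} (G : Finset (EdgeK m)) (p : EdgeK m × (Fin m ↪ Fin n)) : Finset (EdgeK n) :=
  (G.erase p.1).image (mapEdge p.2)

lemma wB_card {m n : ℕ} (G : Finset (EdgeK m)) (f : EdgeK n) (p) (hp : p ∈ wI G f) :
    (wB G p).card = G.card - 1 := by
  simp only [wI, mem_filter, mem_product, mem_univ, and_true] at hp
  rw [wB, Finset.card_image_of_injective _ (mapEdge_inj _), Finset.card_erase_of_mem hp.1]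

lemma wI_card {m n : ℕ} (G : Finset (EdgeK m)) (f : EdgeK n) :
    (wI G f).card * n.choose 2 = G.card * n.descFactorial m := by
  have : (wI G f).card = ∑ a ∈ G, (univ.filter fun v : Fin m ↪ Fin n => mapEdge v a = f).card := by
    rw [wI, Finset.card_filter, Finset.sum_product]
    refine Finset.sum_congr rfl fun a _ => ?_
    rw [Finset.card_filter]
  rw [this, Finset.sum_mul, Finset.sum_congr rfl (fun a _ => w_cnt_edge a f), Finset.sum_const,
    smul_eq_mul]

lemma wI_infl {m n : ℕ} (G : Finset (EdgeK m)) (f : EdgeK n) (p) (hp : p ∈ wI G f) :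
    ((wI G f).filter fun p' => ¬ Disjoint (wB G p) (wB G p')).card * n.descFactorial 3
      ≤ G.card * (G.card * (m.descFactorial 3 * n.descFactorial m)) := by
  have hsub : ((wI G f).filter fun p' => ¬ Disjoint (wB G p) (wB G p')) ⊆
      (wB G p).biUnion fun g => G ×ˢ (univ.filter fun v : Fin m ↪ Fin n =>
        (∃ a, mapEdge v a = f) ∧ (∃ b, mapEdge v b = g)) := by
    intro p' hp'
    simp only [mem_filter] at hp'
    obtain ⟨h1, h2⟩ := hp'
    rw [Finset.not_disjoint_iff] at h2
    obtain ⟨g, hg, hg'⟩ := h2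
    simp only [wI, mem_filter, mem_product, mem_univ, and_true] at h1
    simp only [mem_biUnion, mem_product, mem_filter, mem_univ, true_and]
    refine ⟨g, hg, h1.1, ⟨_, h1.2⟩, ?_⟩
    simp only [wB, mem_image] at hg'
    obtain ⟨b, _, hb⟩ := hg'
    exact ⟨b, hb⟩
  have hne : ∀ g ∈ wB G p, g ≠ f := by
    intro g hg hgf
    simp only [wB, mem_image, mem_erase] at hg
    obtain ⟨b, ⟨hb1, _⟩, hb⟩ := hg
    simp only [wI, mem_filter, mem_product, mem_univ, and_true] at hp
    exact hb1 (mapEdge_inj p.2 (by rw [hb, hgf, hp.2]))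
  calc _ ≤ (∑ g ∈ wB G p, (G ×ˢ (univ.filter fun v : Fin m ↪ Fin n =>
        (∃ a, mapEdge v a = f) ∧ (∃ b, mapEdge v b = g))).card) * n.descFactorial 3 :=
        Nat.mul_le_mul_right _ ((Finset.card_le_card hsub).trans Finset.card_biUnion_le)
    _ = ∑ g ∈ wB G p, G.card * ((univ.filter fun v : Fin m ↪ Fin n =>
        (∃ a, mapEdge v a = f) ∧ (∃ b, mapEdge v b = g)).card * n.descFactorial 3) := by
        rw [Finset.sum_mul]
        refine Finset.sum_congr rfl fun g _ => ?_
        rw [Finset.card_product, mul_assoc]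
    _ ≤ ∑ g ∈ wB G p, G.card * (m.descFactorial 3 * n.descFactorial m) :=
        Finset.sum_le_sum fun g hg => Nat.mul_le_mul_left _ (w_cnt_two f g (hne g hg))
    _ ≤ _ := by
        rw [Finset.sum_const, smul_eq_mul, wB_card G f p hp]
        exact Nat.mul_le_mul_right _ (Nat.sub_le _ _)

lemma copyCount_eq {n m : ℕ} (X : Config n) (G : Finset (EdgeK m)) :
    (copyCount X G : ℝ) = ∑ v : Fin m ↪ Fin n, wind (G.image (mapEdge v)) X := by
  rw [copyCount, Finset.card_filter]
  push_cast
  refine Finset.sum_congr rfl fun v _ => ?_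
  rw [wind_eq]
  simp only [Finset.forall_mem_image]

lemma copyCount_diff {n m : ℕ} (X : Config n) (G : Finset (EdgeK m)) (f : EdgeK n) :
    (copyCount (setEdge X f true) G : ℝ) - copyCount (setEdge X f false) G
      = ∑ p ∈ wI G f, wind (wB G p) X := by
  rw [copyCount_eq, copyCount_eq, ← Finset.sum_sub_distrib, wI, Finset.sum_filter,
    Finset.sum_product_right]
  refine Finset.sum_congr rfl fun v _ => ?_
  by_cases hex : ∃ a ∈ G, mapEdge v a = f
  · obtain ⟨a, ha, haf⟩ := hex
    rw [Finset.sum_eq_single a]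
    · simp only [haf, if_true]
      have e1 : wind (G.image (mapEdge v)) (setEdge X f false) = 0 := by
        rw [wind_eq, if_neg]
        intro h
        have := h f (Finset.mem_image.mpr ⟨a, ha, haf⟩)
        simp [setEdge] at this
      have e2 : G.image (mapEdge v) = insert f (wB G (a, v)) := by
        rw [wB, ← haf, ← Finset.image_insert, Finset.insert_erase ha]
      have e3 : f ∉ wB G (a, v) := by
        intro hg
        simp only [wB, mem_image, mem_erase] at hg
        obtain ⟨b, ⟨hb1, _⟩, hb⟩ := hg
        exact hb1 (mapEdge_inj v (by rw [hb, haf]))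
      rw [e1, e2, wind, Finset.prod_insert e3]
      change wxi (setEdge X f true) f * wind (wB G (a, v)) (setEdge X f true) - 0 = _
      rw [wind_setEdge _ _ e3]
      simp [wxi, setEdge]
    · intro b _ hb
      rw [if_neg]
      intro h
      exact hb (mapEdge_inj v (by rw [haf]; exact h))
    · intro h; exact absurd ha h
  · push Not at hex
    have hf : f ∉ G.image (mapEdge v) := by
      simpa using hex
    rw [wind_setEdge _ _ hf, wind_setEdge _ _ hf, sub_self, Finset.sum_eq_zero]
    intro a ha
    rw [if_neg (hex a ha)]


/-- logistic function. -/
def wsg (t : ℝ) : ℝ := Real.exp t / (1 + Real.exp t)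

lemma wsg_nonneg (t : ℝ) : 0 ≤ wsg t := by unfold wsg; positivity

lemma wsg_le_one (t : ℝ) : wsg t ≤ 1 := by
  unfold wsg
  rw [div_le_one (by positivity)]
  linarith

lemma wsg_sub (x y : ℝ) (h : y ≤ x) : 0 ≤ wsg x - wsg y ∧ wsg x - wsg y ≤ x - y := by
  have hx := Real.exp_pos x
  have hy := Real.exp_pos y
  have e : wsg x - wsg y
      = (Real.exp x - Real.exp y) / ((1 + Real.exp x) * (1 + Real.exp y)) := by
    unfold wsg; field_simp; ring
  have hm := Real.exp_le_exp.mpr h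
  rw [e]
  refine ⟨div_nonneg (by linarith) (by positivity), ?_⟩
  rw [div_le_iff₀ (by positivity)]
  have h1 : Real.exp x - Real.exp y ≤ Real.exp x * (x - y) := by
    have : Real.exp y = Real.exp x * Real.exp (y - x) := by rw [← Real.exp_add]; ring_nf
    have h2 := Real.add_one_le_exp (y - x)
    rw [this]
    nlinarith
  have h3 : 0 ≤ x - y := by linarith
  have h4 : 0 ≤ (x - y) * (1 + Real.exp y + Real.exp x * Real.exp y) := by positivity
  nlinarith

lemma wsg_max (τ x y : ℝ) (hτ : τ = 1 ∨ τ = -1) :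
    max (τ * (wsg x - wsg y)) 0 ≤ max (τ * (x - y)) 0 := by
  rcases le_total y x with h | h <;> have := wsg_sub _ _ h <;> rcases hτ with rfl | rfl
  · exact max_le_max (by linarith) le_rfl
  · rw [max_eq_right (a := -1 * (wsg x - wsg y)) (by linarith)]; exact le_max_right _ _
  · rw [max_eq_right (a := 1 * (wsg x - wsg y)) (by linarith)]; exact le_max_right _ _
  · exact max_le_max (by linarith) le_rfl

section gib
variable {s : ℕ} (V : Fin s → ℕ) (Pt : ∀ i, Finset (EdgeK (V i))) (β : Fin s → ℝ)

lemma gibbs_nonneg (n : ℕ) (X : Config n) : 0 ≤ gibbs V Pt β n X := by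
  unfold gibbs
  exact div_nonneg (Real.exp_pos _).le (Finset.sum_nonneg fun _ _ => (Real.exp_pos _).le)

lemma gibbs_sum (n : ℕ) : ∑ X, gibbs V Pt β n X = 1 := by
  unfold gibbs
  rw [← Finset.sum_div]
  exact div_self (Finset.sum_pos (fun _ _ => Real.exp_pos _) Finset.univ_nonempty).ne'

/-- conditional probability of an edge. -/
def wsig (n : ℕ) (f : EdgeK n) (X : Config n) : ℝ := wsg (dH V Pt β n X f)

lemma setEdge_setEdge {n : ℕ} (X : Config n) (f : EdgeK n) (b c : Bool) :
    setEdge (setEdge X f b) f c = setEdge X f c := by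
  funext g; unfold setEdge; split_ifs <;> rfl

lemma setEdge_self {n : ℕ} (X : Config n) (f : EdgeK n) : setEdge X f (X f) = X := by
  funext g; unfold setEdge; split_ifs with h
  · rw [h]
  · rfl

lemma gibbs_resamp (n : ℕ) : WResamp (gibbs V Pt β n) (wsig V Pt β n) := by
  intro f h hh
  rw [← sub_eq_zero, ← Finset.sum_sub_distrib]
  have key : ∀ X : Config n,
      gibbs V Pt β n (setEdge X f true) * (1 - wsig V Pt β n f X)
        = gibbs V Pt β n (setEdge X f false) * wsig V Pt β n f X := by
    intro X
    unfold gibbs wsig wsg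
    have e : Real.exp (ergmH V Pt β n (setEdge X f true))
        = Real.exp (ergmH V Pt β n (setEdge X f false)) * Real.exp (dH V Pt β n X f) := by
      rw [← Real.exp_add]; unfold dH; ring_nf
    rw [e]
    have := Real.exp_pos (dH V Pt β n X f)
    field_simp
    ring
  have hs : ∀ (X : Config n) b, wsig V Pt β n f (setEdge X f b) = wsig V Pt β n f X := by
    intro X b
    unfold wsig dH
    rw [setEdge_setEdge, setEdge_setEdge]
  refine Finset.sum_involution (fun X _ => setEdge X f (!X f)) ?_ ?_ ?_ ?_
  · intro X _
    have k := key X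
    simp only [hh, hs]
    have hx := setEdge_self X f
    cases hb : X f with
    | true =>
      rw [hb] at hx
      simp only [Bool.not_true, wxi, hb, setEdge, if_true]
      rw [hx] at k
      change _ + (gibbs V Pt β n (setEdge X f false) * _ -
        gibbs V Pt β n (setEdge X f false) * _) = 0
      simp only [Bool.false_eq_true, if_false]
      linear_combination (h X) * k
    | false =>
      rw [hb] at hx
      simp only [Bool.not_false, wxi, hb, setEdge, if_true]
      rw [hx] at k
      change _ + (gibbs V Pt β n (setEdge X f true) * _ -
        gibbs V Pt β n (setEdge X f true) * _) = 0
      simp only [Bool.false_eq_true, if_false]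
      linear_combination (h X) * k
  · intro X _ _ heq
    have := congrFun heq f
    simp [setEdge] at this
  · intro X _; exact mem_univ _
  · intro X _
    rw [setEdge_setEdge]
    have : (!(setEdge X f (!X f)) f) = X f := by simp [setEdge]
    rw [this, setEdge_self]

/-- one-sided asymptotic bound for the conditional edge probabilities. -/
def WP (τ q : ℝ) : Prop := ∀ δ > 0, ∀ᶠ n : ℕ in Filter.atTop, ∀ f : EdgeK n,
  ∑ X, gibbs V Pt β n X * max (τ * (wsig V Pt β n f X - q)) 0 ≤ δ

lemma dens_L2 {τ q : ℝ} (hτ : τ = 1 ∨ τ = -1) (hq0 : 0 ≤ q) (hq1 : q ≤ 1)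
    (h : WP V Pt β τ q) (m : ℕ) (η : ℕ → ℝ) (hη : Filter.Tendsto η Filter.atTop (nhds 0))
    (δ : ℝ) (hδ : 0 < δ) :
    ∀ᶠ n : ℕ in Filter.atTop, ∀ (ι : Type) (I : Finset ι) (B : ι → Finset (EdgeK n)),
      I.Nonempty → (∀ i ∈ I, (B i).card = m) →
      (∀ i ∈ I, ((I.filter fun j => ¬ Disjoint (B i) (B j)).card : ℝ) ≤ η n * I.card) →
      ∑ X, gibbs V Pt β n X * (max (τ * (wdens I B X - q ^ m)) 0) ^ 2 ≤ δ := by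
  have h1 := h (δ / (2 * (m + 1))) (by positivity)
  have h2 := hη.eventually_le_const (show (0:ℝ) < δ / 4 by positivity)
  filter_upwards [h1, h2] with n hn1 hn2 ι I B hI hm hinf
  have := core_main (gibbs V Pt β n) (gibbs_nonneg V Pt β n) (gibbs_sum V Pt β n)
    (wsig V Pt β n) (gibbs_resamp V Pt β n) τ (by rcases hτ with rfl | rfl <;> simp) q hq0 hq1
    _ hn1 I hI B m hm (η n) hinf
  refine this.trans ?_
  have : (m:ℝ) * (δ / (2 * (m + 1))) ≤ δ / 2 := by
    rw [← mul_div_assoc, div_le_div_iff₀ (by positivity) (by positivity)]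
    nlinarith
  linarith

lemma L1_of_L2 {n : ℕ} (μ D : Config n → ℝ) (hμ0 : ∀ X, 0 ≤ μ X) (hμ1 : ∑ X, μ X = 1)
    (δ : ℝ) (hδ : 0 < δ) (h : ∑ X, μ X * D X ^ 2 ≤ δ ^ 2) : ∑ X, μ X * D X ≤ δ := by
  have h1 : ∑ X, μ X * D X * (2 * δ) ≤ ∑ X, (μ X * δ ^ 2 + μ X * D X ^ 2) := by
    refine Finset.sum_le_sum fun X _ => ?_
    nlinarith [hμ0 X, mul_nonneg (hμ0 X) (sq_nonneg (D X - δ))]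
  rw [← Finset.sum_mul, Finset.sum_add_distrib, ← Finset.sum_mul, hμ1] at h1
  nlinarith

lemma w_desc3 (n : ℕ) (hn : 3 ≤ n) :
    (n.descFactorial 3 : ℝ) = 2 * ((n:ℝ) - 2) * n.choose 2 := by
  have h1 : n.descFactorial 3 = (n - 2) * n.descFactorial 2 := Nat.descFactorial_succ n 2
  rw [h1, Nat.descFactorial_eq_factorial_mul_choose]
  push_cast [Nat.cast_sub (show 2 ≤ n by omega)]
  simp [Nat.factorial]; ring

lemma dens_L1 {τ q : ℝ} (hτ : τ = 1 ∨ τ = -1) (hq0 : 0 ≤ q) (hq1 : q ≤ 1)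
    (h : WP V Pt β τ q) {m : ℕ} (G : Finset (EdgeK m)) (δ : ℝ) (hδ : 0 < δ) :
    ∀ᶠ n : ℕ in Filter.atTop, ∀ f : EdgeK n, (wI G f).Nonempty →
      ∑ X, gibbs V Pt β n X * max (τ * (wdens (wI G f) (wB G) X - q ^ (G.card - 1))) 0 ≤ δ := by
  have hlim : Filter.Tendsto (fun n : ℕ => (G.card * m.descFactorial 3 / 2 : ℝ) / ((n:ℝ) - 2))
      Filter.atTop (nhds 0) := by
    refine Filter.Tendsto.const_div_atTop ?_ _
    exact Filter.tendsto_atTop_add_const_right _ (-2) tendsto_natCast_atTop_atTop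
  filter_upwards [dens_L2 V Pt β hτ hq0 hq1 h (G.card - 1) _ hlim (δ ^ 2) (by positivity),
    Filter.eventually_ge_atTop 3] with n hn h3 f hI
  refine L1_of_L2 _ _ (gibbs_nonneg V Pt β n) (gibbs_sum V Pt β n) δ hδ ?_
  refine hn _ (wI G f) (wB G) hI (wB_card G f) fun p hp => ?_
  have k1 : ((((wI G f).filter fun p' => ¬ Disjoint (wB G p) (wB G p')).card : ℝ)
    * n.descFactorial 3) ≤ G.card * (G.card * (m.descFactorial 3 * n.descFactorial m)) := by
    exact_mod_cast wI_infl G f p hp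
  have k2 : ((wI G f).card : ℝ) * n.choose 2 = G.card * n.descFactorial m := by
    exact_mod_cast wI_card G f
  rw [w_desc3 n h3] at k1
  have hc : (0:ℝ) < n.choose 2 := by exact_mod_cast Nat.choose_pos (by omega)
  have hn2 : (0:ℝ) < (n:ℝ) - 2 := by
    have : (3:ℝ) ≤ n := by exact_mod_cast h3
    linarith
  rw [div_mul_eq_mul_div, le_div_iff₀ hn2]
  have k3 : (G.card : ℝ) * (G.card * (m.descFactorial 3 * n.descFactorial m))
    = G.card * m.descFactorial 3 * ((wI G f).card * n.choose 2) := by rw [k2]; ring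
  rw [k3] at k1
  refine le_of_mul_le_mul_right ?_ hc
  nlinarith

lemma rr_tendsto (m : ℕ) (hm : 2 ≤ m) (E : ℝ) :
    Filter.Tendsto (fun n : ℕ => E * (n.descFactorial m : ℝ) / n.choose 2 / (n:ℝ) ^ (m - 2))
      Filter.atTop (nhds (2 * E)) := by
  have h3 : Asymptotics.IsEquivalent Filter.atTop
      (fun n : ℕ => E * ((n:ℝ) ^ m) / ((n:ℝ) ^ 2 / (Nat.factorial 2 : ℝ)) / (n:ℝ) ^ (m - 2))
      (fun n : ℕ => E * (n.descFactorial m : ℝ) / n.choose 2 / (n:ℝ) ^ (m - 2)) := by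
    refine Asymptotics.IsEquivalent.div (Asymptotics.IsEquivalent.div
      (Asymptotics.IsEquivalent.mul Asymptotics.IsEquivalent.refl
        (isEquivalent_descFactorial m).symm)
      (isEquivalent_choose 2).symm) Asymptotics.IsEquivalent.refl
  refine h3.tendsto_nhds ?_
  refine tendsto_const_nhds.congr' ?_
  filter_upwards [Filter.eventually_gt_atTop 0] with n hn
  have hn' : (n:ℝ) ≠ 0 := by positivity
  have : (n:ℝ) ^ m = (n:ℝ) ^ 2 * (n:ℝ) ^ (m - 2) := by
    rw [← pow_add]; congr 1; omega
  rw [this]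
  simp only [Nat.factorial]
  field_simp
  norm_num
  ring

lemma dH_eq (n : ℕ) (X : Config n) (f : EdgeK n) :
    dH V Pt β n X f = ∑ i, β i * (((wI (Pt i) f).card : ℝ) / (n:ℝ) ^ (V i - 2))
      * wdens (wI (Pt i) f) (wB (Pt i)) X := by
  unfold dH ergmH
  rw [← Finset.sum_sub_distrib]
  refine Finset.sum_congr rfl fun i _ => ?_
  rw [← sub_div, ← mul_sub, copyCount_diff, wdens]
  rcases Finset.eq_empty_or_nonempty (wI (Pt i) f) with h | h
  · simp [h]
  · have : ((wI (Pt i) f).card : ℝ) ≠ 0 := by exact_mod_cast h.card_pos.ne'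
    field_simp

lemma wp_step (hV2 : ∀ i, 2 ≤ V i) (hs : 0 < s)
    (hG1E : (Pt ⟨0, hs⟩).card = 1) (hβ : ∀ i : Fin s, 0 < (i : ℕ) → 0 < β i)
    {τ q : ℝ} (hτ : τ = 1 ∨ τ = -1) (hq0 : 0 ≤ q) (hq1 : q ≤ 1)
    (h : WP V Pt β τ q) : WP V Pt β τ (phiF Pt β q) := by
  intro δ hδ
  have hs' : (0:ℝ) < s := by exact_mod_cast hs
  have hτ1 : |τ| = 1 := by rcases hτ with rfl | rfl <;> simp
  have ev : ∀ i : Fin s, ∀ᶠ n : ℕ in Filter.atTop, ∀ f : EdgeK n,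
      ∑ X, gibbs V Pt β n X * (τ * (β i * (((wI (Pt i) f).card : ℝ) / (n:ℝ) ^ (V i - 2))
      * wdens (wI (Pt i) f) (wB (Pt i)) X
        - 2 * β i * ((Pt i).card : ℝ) * q ^ ((Pt i).card - 1)) ⊔ 0) ≤ δ / s := by
    intro i
    set δ' : ℝ := δ / s / 2 with hδ'
    have hδ'0 : 0 < δ' := by positivity
    set K : ℝ := 2 * (Pt i).card * |β i| + 1 with hK
    have hK0 : 0 < K := by positivity
    have r1 := (((rr_tendsto (V i) (hV2 i) (Pt i).card).sub_const
      (2 * ((Pt i).card : ℝ))).abs.const_mul |β i|)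
    rw [sub_self, abs_zero, mul_zero] at r1
    filter_upwards [dens_L1 V Pt β hτ hq0 hq1 h (Pt i) (δ' / K) (by positivity),
      r1.eventually_le_const hδ'0, Filter.eventually_ge_atTop (V i)] with n hn1 hn2 hn3 f
    have hc : (0:ℝ) < n.choose 2 := by
      exact_mod_cast Nat.choose_pos ((hV2 i).trans hn3)
    have k2 : ((wI (Pt i) f).card : ℝ) * n.choose 2 = (Pt i).card * n.descFactorial (V i) := by
      exact_mod_cast wI_card (Pt i) f
    have k3 : ((wI (Pt i) f).card : ℝ) = (Pt i).card * n.descFactorial (V i) / n.choose 2 := by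
      rw [eq_div_iff hc.ne', k2]
    set r : ℝ := ((wI (Pt i) f).card : ℝ) / (n:ℝ) ^ (V i - 2) with hr
    rw [← k3] at hn2
    set W := wdens (wI (Pt i) f) (wB (Pt i)) with hW
    set E : ℝ := ((Pt i).card : ℝ) with hE
    set c : ℝ := q ^ ((Pt i).card - 1) with hc'
    rcases Nat.eq_zero_or_pos (Pt i).card with h0 | hpos
    · have hI0 : ((wI (Pt i) f).card : ℝ) = 0 := by rw [k3, hE, h0]; simp
      have hr0 : r = 0 := by rw [hr, hI0, zero_div]
      have hE0 : E = 0 := by rw [hE, h0]; simp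
      simp only [hr0, hE0]
      simp
      positivity
    · have hI : (wI (Pt i) f).Nonempty := by
        rw [← Finset.card_pos]
        have : 0 < (wI (Pt i) f).card * n.choose 2 := by
          rw [wI_card]
          exact Nat.mul_pos hpos (Nat.descFactorial_pos.mpr hn3)
        exact Nat.pos_of_mul_pos_right this
      have d1 := hn1 f hI
      have pt : ∀ X, (τ * (β i * r * W X - 2 * β i * E * c) ⊔ 0)
          ≤ δ' + 2 * E * |β i| * max (τ * (W X - c)) 0 := by
        intro X
        have hW0 := wdens_nonneg (wI (Pt i) f) (wB (Pt i)) X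
        have hW1 := wdens_le_one (wI (Pt i) f) (wB (Pt i)) X
        rw [← hW] at hW0 hW1
        have p0 : 0 ≤ 2 * E * |β i| * max (τ * (W X - c)) 0 :=
          mul_nonneg (by positivity) (le_max_right _ _)
        refine max_le ?_ (by positivity)
        have p1 : τ * (β i * (r - 2 * E) * W X) ≤ δ' := by
          refine (le_abs_self _).trans ?_
          rw [abs_mul, hτ1, one_mul, abs_mul, abs_mul, abs_of_nonneg hW0]
          refine le_trans ?_ hn2
          exact mul_le_of_le_one_right (by positivity) hW1
        have p2 : 2 * E * (τ * β i * (W X - c)) ≤ 2 * E * |β i| * max (τ * (W X - c)) 0 := by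
          by_cases hi : 0 < (i : ℕ)
          · have hb := hβ i hi
            rw [abs_of_pos hb]
            have := le_max_left (τ * (W X - c)) 0
            have hEb : 0 ≤ 2 * E * β i := by positivity
            nlinarith [mul_le_mul_of_nonneg_left this hEb]
          · have hi0 : i = ⟨0, hs⟩ := Fin.ext (by simpa using hi)
            have hcard : (Pt i).card = 1 := by rw [hi0]; exact hG1E
            have hc1 : c = 1 := by rw [hc', hcard]; simp
            have hWX : W X = 1 := by
              rw [hW, wdens, Finset.sum_congr rfl (g := fun _ => (1:ℝ))]
              · rw [Finset.sum_const, nsmul_eq_mul, mul_one]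
                exact div_self (by exact_mod_cast hI.card_pos.ne')
              · intro p hp
                have := wB_card (Pt i) f p hp
                rw [hcard, Nat.sub_self, Finset.card_eq_zero] at this
                rw [this]; simp [wind]
            rw [hWX, hc1] at p0 ⊢
            rw [sub_self] at p0 ⊢
            rw [mul_zero (τ * β i), mul_zero]
            exact p0
        linarith
      calc _ ≤ ∑ X, gibbs V Pt β n X * (δ' + 2 * E * |β i| * max (τ * (W X - c)) 0) :=
            Finset.sum_le_sum fun X _ => mul_le_mul_of_nonneg_left (pt X) (gibbs_nonneg V Pt β n X)
        _ = δ' + 2 * E * |β i| * ∑ X, gibbs V Pt β n X * max (τ * (W X - c)) 0 := by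
            simp only [mul_add]
            rw [Finset.sum_add_distrib, ← Finset.sum_mul, gibbs_sum, one_mul, Finset.mul_sum]
            congr 1
            refine Finset.sum_congr rfl fun X _ => by ring
        _ ≤ δ' + 2 * E * |β i| * (δ' / K) := by
            have : 0 ≤ 2 * E * |β i| := by positivity
            linarith [mul_le_mul_of_nonneg_left d1 this]
        _ ≤ δ' + δ' := by
            have : 2 * E * |β i| * (δ' / K) ≤ K * (δ' / K) :=
              mul_le_mul_of_nonneg_right (by rw [hK]; linarith) (by positivity)
            rw [mul_div_cancel₀ _ hK0.ne'] at this
            linarith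
        _ = δ / s := by rw [hδ']; ring
  filter_upwards [Filter.eventually_all.mpr ev] with n hn f
  have pt : ∀ X, max (τ * (wsig V Pt β n f X - phiF Pt β q)) 0 ≤
      ∑ i, (τ * (β i * (((wI (Pt i) f).card : ℝ) / (n:ℝ) ^ (V i - 2))
      * wdens (wI (Pt i) f) (wB (Pt i)) X
        - 2 * β i * ((Pt i).card : ℝ) * q ^ ((Pt i).card - 1)) ⊔ 0) := by
    intro X
    have : phiF Pt β q = wsg (PsiF Pt β q) := rfl
    rw [wsig, this]
    refine (wsg_max _ _ _ hτ).trans ?_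
    rw [dH_eq, PsiF, ← Finset.sum_sub_distrib, Finset.mul_sum]
    refine max_le (Finset.sum_le_sum fun i _ => le_max_left _ _)
      (Finset.sum_nonneg fun i _ => le_max_right _ _)
  calc _ ≤ ∑ X, gibbs V Pt β n X * ∑ i, (τ * (β i * (((wI (Pt i) f).card : ℝ) /
        (n:ℝ) ^ (V i - 2)) * wdens (wI (Pt i) f) (wB (Pt i)) X
        - 2 * β i * ((Pt i).card : ℝ) * q ^ ((Pt i).card - 1)) ⊔ 0) :=
        Finset.sum_le_sum fun X _ => mul_le_mul_of_nonneg_left (pt X) (gibbs_nonneg V Pt β n X)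
    _ ≤ ∑ i : Fin s, δ / s := by
        simp only [Finset.mul_sum]
        rw [Finset.sum_comm]
        exact Finset.sum_le_sum fun i _ => hn i f
    _ = δ := by
        rw [Finset.sum_const, Finset.card_univ, Fintype.card_fin, nsmul_eq_mul]
        field_simp

lemma wp_closed {τ q : ℝ} (hτ : τ = 1 ∨ τ = -1) (u : ℕ → ℝ) (hu : ∀ k, WP V Pt β τ (u k))
    (hlim : Filter.Tendsto u Filter.atTop (nhds q)) : WP V Pt β τ q := by
  intro δ hδ
  obtain ⟨k, hk⟩ := (Metric.tendsto_atTop.mp hlim (δ / 2) (by positivity))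
  have hk' := hk k le_rfl
  rw [Real.dist_eq] at hk'
  have hτ1 : |τ| = 1 := by rcases hτ with rfl | rfl <;> simp
  filter_upwards [hu k (δ / 2) (by positivity)] with n hn f
  have pt : ∀ X, max (τ * (wsig V Pt β n f X - q)) 0
      ≤ max (τ * (wsig V Pt β n f X - u k)) 0 + δ / 2 := by
    intro X
    have h1 := le_max_left (τ * (wsig V Pt β n f X - u k)) 0
    have h2 := le_max_right (τ * (wsig V Pt β n f X - u k)) 0
    refine max_le ?_ (by linarith)
    have h3 : τ * (u k - q) ≤ δ / 2 := by
      refine (le_abs_self _).trans ?_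
      rw [abs_mul, hτ1, one_mul]; exact hk'.le
    nlinarith
  calc _ ≤ ∑ X, gibbs V Pt β n X * (max (τ * (wsig V Pt β n f X - u k)) 0 + δ / 2) :=
        Finset.sum_le_sum fun X _ => mul_le_mul_of_nonneg_left (pt X) (gibbs_nonneg V Pt β n X)
    _ = (∑ X, gibbs V Pt β n X * max (τ * (wsig V Pt β n f X - u k)) 0) + δ / 2 := by
        simp only [mul_add]
        rw [Finset.sum_add_distrib, ← Finset.sum_mul, gibbs_sum, one_mul]
    _ ≤ δ := by linarith [hn f]

end gib

section fin
variable {s : ℕ} (V : Fin s → ℕ) (Pt : ∀ i, Finset (EdgeK (V i))) (β : Fin s → ℝ)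

lemma phiF_cont : Continuous (phiF Pt β) := by
  have h : Continuous (PsiF Pt β) := by
    unfold PsiF; fun_prop
  unfold phiF
  refine Continuous.div (Real.continuous_exp.comp h)
    (continuous_const.add (Real.continuous_exp.comp h)) fun p => ?_
  positivity

lemma phiF_mem (p : ℝ) : phiF Pt β p ∈ Set.Icc (0:ℝ) 1 :=
  ⟨wsg_nonneg (PsiF Pt β p), wsg_le_one (PsiF Pt β p)⟩

lemma phiF_mono (hs : 0 < s)
    (hG1E : (Pt ⟨0, hs⟩).card = 1) (hβ : ∀ i : Fin s, 0 < (i : ℕ) → 0 < β i)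
    (p q : ℝ) (hp : 0 ≤ p) (hpq : p ≤ q) : phiF Pt β p ≤ phiF Pt β q := by
  have h : PsiF Pt β p ≤ PsiF Pt β q := by
    refine Finset.sum_le_sum fun i _ => ?_
    by_cases hi : 0 < (i : ℕ)
    · have := hβ i hi
      have h2 := pow_le_pow_left₀ hp hpq ((Pt i).card - 1)
      exact mul_le_mul_of_nonneg_left h2 (by positivity)
    · have hi0 : i = ⟨0, hs⟩ := Fin.ext (by simpa using hi)
      have hcard : (Pt i).card = 1 := by rw [hi0]; exact hG1E
      rw [hcard]; simp
  have := (wsg_sub _ _ h).1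
  change wsg _ ≤ wsg _
  linarith

lemma wp_fix (hV2 : ∀ i, 2 ≤ V i) (hs : 0 < s)
    (hG1E : (Pt ⟨0, hs⟩).card = 1) (hβ : ∀ i : Fin s, 0 < (i : ℕ) → 0 < β i)
    (pstar : ℝ) (hHT : HighTemp Pt β pstar) :
    WP V Pt β 1 pstar ∧ WP V Pt β (-1) pstar := by
  obtain ⟨hp, hfix, huniq, -⟩ := hHT
  have hmono := phiF_mono V Pt β hs hG1E hβ
  have mem : ∀ q0 ∈ Set.Icc (0:ℝ) 1, ∀ k, (phiF Pt β)^[k] q0 ∈ Set.Icc (0:ℝ) 1 := by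
    intro q0 h0 k
    cases k with
    | zero => exact h0
    | succ k => rw [Function.iterate_succ_apply']; exact phiF_mem V Pt β _
  have main : ∀ τ : ℝ, (τ = 1 ∨ τ = -1) → ∀ q0 ∈ Set.Icc (0:ℝ) 1, WP V Pt β τ q0 →
      (∃ x, Filter.Tendsto (fun k => (phiF Pt β)^[k] q0) Filter.atTop (nhds x)) →
      WP V Pt β τ pstar := by
    intro τ hτ q0 h0 hw ⟨x, hx⟩
    have hxI : x ∈ Set.Icc (0:ℝ) 1 :=
      isClosed_Icc.mem_of_tendsto hx (Filter.Eventually.of_forall (mem q0 h0))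
    have hxf : phiF Pt β x = x :=
      isFixedPt_of_tendsto_iterate hx (phiF_cont V Pt β).continuousAt
    rw [← huniq x hxI hxf]
    refine wp_closed V Pt β hτ _ (fun k => ?_) hx
    induction k with
    | zero => exact hw
    | succ k ih =>
      rw [Function.iterate_succ_apply']
      exact wp_step V Pt β hV2 hs hG1E hβ hτ (mem q0 h0 k).1 (mem q0 h0 k).2 ih
  constructor
  · refine main 1 (Or.inl rfl) 1 ⟨zero_le_one, le_rfl⟩ ?_ ?_
    · intro δ hδ
      refine Filter.Eventually.of_forall fun n f => ?_
      rw [Finset.sum_eq_zero]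
      · exact hδ.le
      · intro X _
        have : wsig V Pt β n f X ≤ 1 := wsg_le_one _
        rw [max_eq_right (by linarith), mul_zero]
    · have h1 : Antitone (fun k => (phiF Pt β)^[k] 1) := by
        refine antitone_nat_of_succ_le fun k => ?_
        induction k with
        | zero => exact (phiF_mem V Pt β _).2
        | succ k ih =>
          rw [Function.iterate_succ_apply'] at ih
          rw [Function.iterate_succ_apply', Function.iterate_succ_apply' _ k]
          exact hmono _ _ (phiF_mem V Pt β _).1 ih
      exact ⟨_, tendsto_atTop_ciInf h1 ⟨0, by
        rintro _ ⟨k, rfl⟩; exact (mem 1 ⟨zero_le_one, le_rfl⟩ k).1⟩⟩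
  · refine main (-1) (Or.inr rfl) 0 ⟨le_rfl, zero_le_one⟩ ?_ ?_
    · intro δ hδ
      refine Filter.Eventually.of_forall fun n f => ?_
      rw [Finset.sum_eq_zero]
      · exact hδ.le
      · intro X _
        have : 0 ≤ wsig V Pt β n f X := wsg_nonneg _
        rw [max_eq_right (by linarith), mul_zero]
    · have h1 : Monotone (fun k => (phiF Pt β)^[k] 0) := by
        refine monotone_nat_of_le_succ fun k => ?_
        induction k with
        | zero => exact (phiF_mem V Pt β _).1
        | succ k ih =>
          rw [Function.iterate_succ_apply', Function.iterate_succ_apply' _ (k + 1)]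
          exact hmono _ _ (mem 0 ⟨le_rfl, zero_le_one⟩ k).1 ih
      exact ⟨_, tendsto_atTop_ciSup h1 ⟨1, by
        rintro _ ⟨k, rfl⟩; exact (mem 0 ⟨le_rfl, zero_le_one⟩ k).2⟩⟩

lemma cyclePattern_card (l : ℕ) [NeZero l] (hl : 4 ≤ l) : (cyclePattern l).card = l := by
  have h1 : (1 : Fin l) ≠ 0 := by
    intro h
    have := congrArg Fin.val h
    rw [Fin.val_one', Fin.val_zero, Nat.mod_eq_of_lt (by omega)] at this
    omega
  have h2 : (1 + 1 : Fin l) ≠ 0 := by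
    intro h
    have := congrArg Fin.val h
    rw [Fin.val_add, Fin.val_one', Fin.val_zero, Nat.mod_eq_of_lt (a := 1) (by omega),
      Nat.mod_eq_of_lt (by omega)] at this
    omega
  have hd : ∀ i : Fin l, ¬ (s(i, i + 1) : Sym2 (Fin l)).IsDiag := by
    intro i h
    rw [Sym2.mk_isDiag_iff] at h
    exact h1 (by simpa using h.symm)
  have e : cyclePattern l = univ.image (fun i : Fin l => (⟨s(i, i + 1), hd i⟩ : EdgeK l)) := by
    ext a
    simp only [cyclePattern, mem_filter, mem_univ, true_and, mem_image, Subtype.ext_iff]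
    exact ⟨fun ⟨i, hi⟩ => ⟨i, hi.symm⟩, fun ⟨i, hi⟩ => ⟨i, hi.symm⟩⟩
  rw [e, Finset.card_image_of_injective, Finset.card_univ, Fintype.card_fin]
  intro i j hij
  have := congrArg Subtype.val hij
  simp only [Sym2.eq_iff] at this
  rcases this with h | ⟨ha, hb⟩
  · exact h.1
  · exfalso
    apply h2
    rw [ha, add_assoc] at hb
    simpa using hb

lemma cyc_infl {m n : ℕ} (G : Finset (EdgeK m)) (v : Fin m ↪ Fin n) :
    ((univ.filter fun v' : Fin m ↪ Fin n =>
      ¬ Disjoint (G.image (mapEdge v)) (G.image (mapEdge v'))).card) * n.choose 2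
      ≤ G.card * (G.card * n.descFactorial m) := by
  have hsub : (univ.filter fun v' : Fin m ↪ Fin n =>
      ¬ Disjoint (G.image (mapEdge v)) (G.image (mapEdge v'))) ⊆
      G.biUnion fun a => G.biUnion fun b =>
        univ.filter fun v' : Fin m ↪ Fin n => mapEdge v' b = mapEdge v a := by
    intro v' hv'
    simp only [mem_filter, mem_univ, true_and] at hv'
    rw [Finset.not_disjoint_iff] at hv'
    obtain ⟨g, hg, hg'⟩ := hv'
    rw [mem_image] at hg hg'
    obtain ⟨a, ha, hag⟩ := hg
    obtain ⟨b, hb, hbg⟩ := hg'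
    simp only [mem_biUnion, mem_filter, mem_univ, true_and]
    exact ⟨a, ha, b, hb, hbg.trans hag.symm⟩
  calc _ ≤ (∑ a ∈ G, ∑ b ∈ G, (univ.filter fun v' : Fin m ↪ Fin n =>
        mapEdge v' b = mapEdge v a).card) * n.choose 2 := by
        refine Nat.mul_le_mul_right _ ((Finset.card_le_card hsub).trans ?_)
        refine Finset.card_biUnion_le.trans (Finset.sum_le_sum fun a _ => ?_)
        exact Finset.card_biUnion_le
    _ = _ := by
        simp only [Finset.sum_mul, w_cnt_edge, Finset.sum_const, smul_eq_mul]

lemma choose_two_real (n : ℕ) : (n.choose 2 : ℝ) = n * (n - 1) / 2 := Nat.cast_choose_two ℝ n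

lemma inv_choose_tendsto (c : ℝ) :
    Filter.Tendsto (fun n : ℕ => c / (n.choose 2 : ℝ)) Filter.atTop (nhds 0) := by
  refine Filter.Tendsto.const_div_atTop ?_ _
  refine Filter.tendsto_atTop_mono' _ ?_
    (Filter.tendsto_atTop_add_const_right _ (-1) tendsto_natCast_atTop_atTop)
  filter_upwards [Filter.eventually_ge_atTop 2] with n hn
  rw [choose_two_real]
  have : (2:ℝ) ≤ n := by exact_mod_cast hn
  nlinarith

end fin

end WPR

/-- **Weak pseudo-randomness.** In the high temperature phase with unique fixed point `p*`,
with probability tending to one a sample from the Gibbs measure has `p* n²/2 + O(εn²)` edges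
and at most `(n p*)^l + ε n^l` labelled copies of the cycle `C_l` (for fixed even `l ≥ 4`). -/
theorem weak_pseudo_randomness
    {L s : ℕ} (hL : 2 ≤ L) (hs : 0 < s)
    (V : Fin s → ℕ) (Pt : ∀ i, Finset (EdgeK (V i))) (β : Fin s → ℝ)
    (hV2 : ∀ i, 2 ≤ V i) (hVL : ∀ i, V i ≤ L)
    (hG1V : V ⟨0, hs⟩ = 2) (hG1E : (Pt ⟨0, hs⟩).card = 1)
    (hβ : ∀ i : Fin s, 0 < (i : ℕ) → 0 < β i)
    (pstar : ℝ) (hHT : HighTemp Pt β pstar)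
    (ε : ℝ) (hε : 0 < ε) (l : ℕ) (hl : 4 ≤ l) (hleven : Even l) :
    Filter.Tendsto (fun n : ℕ =>
        ∑ X ∈ univ.filter (fun X : Config n =>
            |(edgeCount X : ℝ) - pstar * (n : ℝ) ^ 2 / 2| ≤ ε * (n : ℝ) ^ 2 ∧
            (copyCount X (@cyclePattern l ⟨by omega⟩) : ℝ) ≤
              ((n : ℝ) * pstar) ^ l + ε * (n : ℝ) ^ l),
          gibbs V Pt β n X)
      Filter.atTop (nhds 1) := by
  have hne : NeZero l := ⟨by omega⟩
  obtain ⟨hw1, hw2⟩ := wp_fix V Pt β hV2 hs hG1E hβ pstar hHT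
  obtain ⟨⟨hp0, hp1⟩, -⟩ := hHT
  have hcyc : (@cyclePattern l hne).card = l := cyclePattern_card l hl
  rw [Metric.tendsto_atTop']
  intro δ hδ
  suffices hev : ∀ᶠ n : ℕ in Filter.atTop,
      1 - δ / 2 ≤ ∑ X ∈ univ.filter (fun X : Config n =>
            |(edgeCount X : ℝ) - pstar * (n : ℝ) ^ 2 / 2| ≤ ε * (n : ℝ) ^ 2 ∧
            (copyCount X (@cyclePattern l ⟨by omega⟩) : ℝ) ≤
              ((n : ℝ) * pstar) ^ l + ε * (n : ℝ) ^ l),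
          gibbs V Pt β n X by
    obtain ⟨N, hN⟩ := Filter.eventually_atTop.mp hev
    refine ⟨N, fun n hn => ?_⟩
    have h1 := hN n hn.le
    have h2 : ∑ X ∈ univ.filter (fun X : Config n =>
            |(edgeCount X : ℝ) - pstar * (n : ℝ) ^ 2 / 2| ≤ ε * (n : ℝ) ^ 2 ∧
            (copyCount X (@cyclePattern l ⟨by omega⟩) : ℝ) ≤
              ((n : ℝ) * pstar) ^ l + ε * (n : ℝ) ^ l),
          gibbs V Pt β n X ≤ 1 := by
      rw [← gibbs_sum V Pt β n]
      exact Finset.sum_le_sum_of_subset_of_nonneg (Finset.filter_subset _ _)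
        fun X _ _ => gibbs_nonneg V Pt β n X
    rw [Real.dist_eq, abs_lt]
    constructor <;> linarith
  set κ : ℝ := δ * ε ^ 2 / 6 with hκ
  have hκ0 : 0 < κ := by positivity
  have ev1 := dens_L2 V Pt β (Or.inl rfl) hp0 hp1 hw1 1 _ (inv_choose_tendsto 1) κ hκ0
  have ev2 := dens_L2 V Pt β (Or.inr rfl) hp0 hp1 hw2 1 _ (inv_choose_tendsto 1) κ hκ0
  have ev3 := dens_L2 V Pt β (Or.inl rfl) hp0 hp1 hw1 l _ (inv_choose_tendsto (l * l)) κ hκ0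
  have ev4 := (tendsto_natCast_atTop_atTop (R := ℝ)).eventually_ge_atTop (1 / ε)
  filter_upwards [ev1, ev2, ev3, ev4, Filter.eventually_ge_atTop l] with n h1 h2 h3 h4 h5
  have hn0 : (0:ℝ) < n := by
    have : 0 < n := by omega
    exact_mod_cast this
  have hc : (0:ℝ) < n.choose 2 := by exact_mod_cast Nat.choose_pos (by omega)
  have hcard : ((univ : Finset (EdgeK n)).card : ℝ) = n.choose 2 := by
    rw [Finset.card_univ, card_EdgeK]
  have hEne : (univ : Finset (EdgeK n)).Nonempty := by
    rw [← Finset.card_pos]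
    have : (0:ℝ) < ((univ : Finset (EdgeK n)).card : ℝ) := by rw [hcard]; exact hc
    exact_mod_cast this
  have einf : ∀ e ∈ (univ : Finset (EdgeK n)),
      (((univ : Finset (EdgeK n)).filter fun j =>
        ¬ Disjoint ({e} : Finset (EdgeK n)) ({j} : Finset (EdgeK n))).card : ℝ)
        ≤ 1 / (n.choose 2 : ℝ) * ((univ : Finset (EdgeK n)).card : ℝ) := by
    intro e _
    rw [hcard, one_div, inv_mul_cancel₀ hc.ne']
    have : ((univ : Finset (EdgeK n)).filter fun j =>
        ¬ Disjoint ({e} : Finset (EdgeK n)) ({j} : Finset (EdgeK n))) ⊆ {e} := by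
      intro j hj
      simp only [mem_filter, Finset.disjoint_singleton, not_not] at hj
      rw [Finset.mem_singleton, hj.2]
    have := Finset.card_le_card this
    rw [Finset.card_singleton] at this
    exact_mod_cast this
  have h1' := h1 (EdgeK n) univ (fun e => {e}) hEne (fun e _ => Finset.card_singleton e) einf
  have h2' := h2 (EdgeK n) univ (fun e => {e}) hEne (fun e _ => Finset.card_singleton e) einf
  have hdf : 0 < n.descFactorial l := Nat.descFactorial_pos.mpr h5
  have hcardC : (univ : Finset (Fin l ↪ Fin n)).card = n.descFactorial l := by
    rw [Finset.card_univ, Fintype.card_embedding_eq, Fintype.card_fin, Fintype.card_fin]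
  have h3' := h3 (Fin l ↪ Fin n) univ (fun v => (@cyclePattern l hne).image (mapEdge v))
    (by rw [← Finset.card_pos, hcardC]; exact hdf)
    (fun v _ => by rw [Finset.card_image_of_injective _ (mapEdge_inj v), hcyc])
    (fun v _ => by
      have := cyc_infl (@cyclePattern l hne) v
      rw [hcyc] at this
      have this' : (((univ.filter fun v' : Fin l ↪ Fin n =>
        ¬ Disjoint ((@cyclePattern l hne).image (mapEdge v))
          ((@cyclePattern l hne).image (mapEdge v'))).card : ℝ)) * n.choose 2
          ≤ l * (l * n.descFactorial l) := by exact_mod_cast this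
      rw [hcardC, div_mul_eq_mul_div, le_div_iff₀ hc]
      linarith)
  set W : Config n → ℝ := wdens (univ : Finset (EdgeK n)) (fun e => {e}) with hW
  set C : Config n → ℝ := wdens (univ : Finset (Fin l ↪ Fin n))
    (fun v => (@cyclePattern l hne).image (mapEdge v)) with hC
  rw [pow_one] at h1' h2'
  have hWe : ∀ X, (edgeCount X : ℝ) = W X * n.choose 2 := by
    intro X
    rw [hW, wdens, hcard, div_mul_cancel₀ _ hc.ne', edgeCount, Finset.card_filter]
    push_cast
    refine Finset.sum_congr rfl fun e _ => ?_
    simp [wind, wxi]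
  have hCe : ∀ X, (copyCount X (@cyclePattern l hne) : ℝ) = C X * n.descFactorial l := by
    intro X
    have : (n.descFactorial l : ℝ) ≠ 0 := by exact_mod_cast hdf.ne'
    rw [hC, wdens, hcardC, div_mul_cancel₀ _ this, copyCount_eq]
  have bad : ∀ X : Config n, ¬ (|(edgeCount X : ℝ) - pstar * (n : ℝ) ^ 2 / 2| ≤ ε * (n : ℝ) ^ 2 ∧
            (copyCount X (@cyclePattern l hne) : ℝ) ≤
              ((n : ℝ) * pstar) ^ l + ε * (n : ℝ) ^ l) →
      ε ^ 2 ≤ (max (1 * (W X - pstar)) 0) ^ 2 + (max (-1 * (W X - pstar)) 0) ^ 2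
        + (max (1 * (C X - pstar ^ l)) 0) ^ 2 := by
    intro X hX
    by_contra! hlt
    have q1 := sq_nonneg (max (1 * (W X - pstar)) 0)
    have q2 := sq_nonneg (max (-1 * (W X - pstar)) 0)
    have q3 := sq_nonneg (max (1 * (C X - pstar ^ l)) 0)
    have d1 : max (1 * (W X - pstar)) 0 < ε := lt_of_pow_lt_pow_left₀ 2 hε.le (by linarith)
    have d2 : max (-1 * (W X - pstar)) 0 < ε := lt_of_pow_lt_pow_left₀ 2 hε.le (by linarith)
    have d3 : max (1 * (C X - pstar ^ l)) 0 < ε := lt_of_pow_lt_pow_left₀ 2 hε.le (by linarith)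
    have d1' := (le_max_left _ _).trans_lt d1
    have d2' := (le_max_left _ _).trans_lt d2
    have d3' := (le_max_left _ _).trans_lt d3
    have hn1 : 1 ≤ ε * n := by
      rw [div_le_iff₀ hε] at h4; linarith
    apply hX
    constructor
    · rw [hWe, choose_two_real, abs_le]
      have hcc : (n:ℝ) * (n - 1) / 2 ≤ n ^ 2 / 2 := by nlinarith
      have hc' := hc
      rw [choose_two_real] at hc'
      have m1 : (W X - pstar) * ((n:ℝ) * (n - 1) / 2) ≤ ε * ((n:ℝ) * (n - 1) / 2) :=
        mul_le_mul_of_nonneg_right (by linarith) hc'.le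
      have m2 : -ε * ((n:ℝ) * (n - 1) / 2) ≤ (W X - pstar) * ((n:ℝ) * (n - 1) / 2) :=
        mul_le_mul_of_nonneg_right (by linarith) hc'.le
      have m3 : ε * ((n:ℝ) * (n - 1) / 2) ≤ ε * (n ^ 2 / 2) :=
        mul_le_mul_of_nonneg_left hcc hε.le
      have m4 : (n:ℝ) ≤ ε * n ^ 2 := by nlinarith
      have m5 : pstar * n ≤ n := by nlinarith
      have m6 : 0 ≤ pstar * n := by positivity
      have m7 : W X * ((n:ℝ) * (n - 1) / 2) - pstar * (n:ℝ) ^ 2 / 2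
        = (W X - pstar) * ((n:ℝ) * (n - 1) / 2) - pstar * n / 2 := by ring
      rw [m7]
      have m8 : 0 ≤ ε * (n:ℝ) ^ 2 := by positivity
      constructor <;> linarith
    · rw [hCe]
      have hC0 : 0 ≤ C X := wdens_nonneg _ _ X
      have hle : (n.descFactorial l : ℝ) ≤ (n:ℝ) ^ l := by
        exact_mod_cast Nat.descFactorial_le_pow n l
      calc C X * n.descFactorial l ≤ C X * (n:ℝ) ^ l := mul_le_mul_of_nonneg_left hle hC0
        _ ≤ (pstar ^ l + ε) * (n:ℝ) ^ l :=
            mul_le_mul_of_nonneg_right (by linarith) (by positivity)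
        _ = _ := by rw [mul_pow]; ring
  have hsplit := Finset.sum_filter_add_sum_filter_not (univ : Finset (Config n))
    (fun X : Config n =>
            |(edgeCount X : ℝ) - pstar * (n : ℝ) ^ 2 / 2| ≤ ε * (n : ℝ) ^ 2 ∧
            (copyCount X (@cyclePattern l hne) : ℝ) ≤
              ((n : ℝ) * pstar) ^ l + ε * (n : ℝ) ^ l) (gibbs V Pt β n)
  rw [gibbs_sum] at hsplit
  have hbad : (∑ X ∈ univ.filter (fun X : Config n => ¬ (
            |(edgeCount X : ℝ) - pstar * (n : ℝ) ^ 2 / 2| ≤ ε * (n : ℝ) ^ 2 ∧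
            (copyCount X (@cyclePattern l hne) : ℝ) ≤
              ((n : ℝ) * pstar) ^ l + ε * (n : ℝ) ^ l)), gibbs V Pt β n X) * ε ^ 2
      ≤ 3 * κ := by
    rw [Finset.sum_mul]
    calc _ ≤ ∑ X ∈ univ.filter (fun X : Config n => ¬ (
            |(edgeCount X : ℝ) - pstar * (n : ℝ) ^ 2 / 2| ≤ ε * (n : ℝ) ^ 2 ∧
            (copyCount X (@cyclePattern l hne) : ℝ) ≤
              ((n : ℝ) * pstar) ^ l + ε * (n : ℝ) ^ l)), gibbs V Pt β n X *
            ((max (1 * (W X - pstar)) 0) ^ 2 + (max (-1 * (W X - pstar)) 0) ^ 2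
        + (max (1 * (C X - pstar ^ l)) 0) ^ 2) :=
          Finset.sum_le_sum fun X hX => mul_le_mul_of_nonneg_left
            (bad X (Finset.mem_filter.mp hX).2) (gibbs_nonneg V Pt β n X)
      _ ≤ ∑ X, gibbs V Pt β n X *
            ((max (1 * (W X - pstar)) 0) ^ 2 + (max (-1 * (W X - pstar)) 0) ^ 2
        + (max (1 * (C X - pstar ^ l)) 0) ^ 2) :=
          Finset.sum_le_sum_of_subset_of_nonneg (Finset.filter_subset _ _) fun X _ _ =>
            mul_nonneg (gibbs_nonneg V Pt β n X) (by positivity)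
      _ ≤ 3 * κ := by
          simp only [mul_add, Finset.sum_add_distrib]
          linarith
  have hb2 : (∑ X ∈ univ.filter (fun X : Config n => ¬ (
            |(edgeCount X : ℝ) - pstar * (n : ℝ) ^ 2 / 2| ≤ ε * (n : ℝ) ^ 2 ∧
            (copyCount X (@cyclePattern l hne) : ℝ) ≤
              ((n : ℝ) * pstar) ^ l + ε * (n : ℝ) ^ l)), gibbs V Pt β n X) ≤ δ / 2 := by
    refine le_of_mul_le_mul_right (hbad.trans (le_of_eq ?_)) (show (0:ℝ) < ε ^ 2 by positivity)
    rw [hκ]; ring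
  linarith
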